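/- Let a, b, α > 0 and β ∈ ℝ, let ψ be a smooth real function on a neighborhood of 0 with ψ(0)=b, ψ'(0)=−α, ψ''(0)=2β, and define m(r) := ψ((a−r)²) for r near a; for ν < b close to b let R(ν) be the unique solution near a of m(R)=ν, φ(ν) := 2∫_{R(ν)}^{a} ν/(m(r)√(m(r)²−ν²)) dr, and θ_cut := π/√(2αb). For ν close to b, write η := arccos(ν/b), and let r_ν be the unique solution near a of the equation ∫_{r_ν}^{a} ν/(m(s)√(m(s)²−ν²)) ds = φ(ν) − θ_cut (the integral taken with the usual orientation, so it is negative when r_ν > a). Then, as η → 0⁺, r_ν = a − ((6bβ − α²)·√b·π / (16√2 · α^{5/2}))·η³ + O(η⁵). -/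

import Mathlib

open Set Asymptotics Filter Real

lemma mvt_bigO {T T' : ℝ → ℝ} {c : ℝ} {k : ℕ} (hT : ∀ᶠ w in nhds c, HasDerivAt T (T' w) w)
    (hO : T' =O[nhds c] fun w => (w - c) ^ k) :
    ∃ C > 0, ∃ ε > 0, ∀ r, r < ε → ∀ x y, |x - c| ≤ r → |y - c| ≤ r →
      |T x - T y| ≤ C * r ^ k * |x - y| := by
  obtain ⟨C, hC, hO⟩ := hO.exists_pos
  rw [IsBigOWith] at hO
  obtain ⟨ε, hε, h⟩ := Metric.eventually_nhds_iff.1 (hT.and hO)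
  refine ⟨C, hC, ε, hε, fun r hr x y hx hy => ?_⟩
  have key := (convex_closedBall c r).norm_image_sub_le_of_norm_hasDerivWithin_le
    (f := T) (f' := T') (C := C * r ^ k) (x := y) (y := x) ?_ ?_ ?_ ?_
  · simpa using key
  · intro w hw
    exact (h (lt_of_le_of_lt hw hr)).1.hasDerivWithinAt
  · intro w hw
    refine ((h (lt_of_le_of_lt hw hr)).2).trans ?_
    rw [norm_pow]
    have : ‖w - c‖ ≤ r := by simpa [dist_eq_norm] using hw
    gcongr
  · simpa [Real.dist_eq] using hy
  · simpa [Real.dist_eq] using hx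

lemma taylor2 {g : ℝ → ℝ} {c : ℝ} (hg : ContDiffAt ℝ 2 g c) :
    (fun u => g u - g c - deriv g c * (u - c)) =O[nhds c] fun u => (u - c) ^ 2 := by
  have h1 : ContDiffAt ℝ 1 (deriv g) c := hg.derivWithin (by norm_num)
  have h2 : ∀ᶠ u in nhds c, HasDerivAt g (deriv g u) u :=
    (hg.eventually (by decide)).mono fun u hu => (hu.differentiableAt (by norm_num)).hasDerivAt
  obtain ⟨C, hC, ε, hε, h⟩ := mvt_bigO (T := fun u => g u - g c - deriv g c * (u - c))
    (T' := fun u => deriv g u - deriv g c) (c := c) (k := 1)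
    (h2.mono fun u hu => by
      have := (hu.sub_const (g c)).sub (((hasDerivAt_id u).sub_const c).const_mul (deriv g c))
      exact this.congr_deriv (by simp))
    (by simpa using (h1.differentiableAt (by norm_num)).hasDerivAt.isBigO_sub)
  refine IsBigO.of_bound C ?_
  refine Metric.eventually_nhds_iff.2 ⟨ε, hε, fun u hu => ?_⟩
  have := h |u - c| (by simpa [Real.dist_eq] using hu) u c le_rfl (by simp)
  simp only [Real.norm_eq_abs, abs_pow]
  simp only [sub_self, mul_zero, sub_zero, pow_one] at this
  nlinarith [this]

/-- Second-order expansion predicate. -/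
structure E2 {ι : Type*} (l : Filter ι) (z f : ι → ℝ) (c : ℝ) (d : ι → ℝ) : Prop where
  bdd : d =O[l] (fun _ => (1:ℝ))
  rem : (fun i => f i - c - d i * z i) =O[l] (fun i => z i ^ 2)

namespace E2
variable {ι : Type*} {l : Filter ι} {z f f₁ f₂ d d₁ d₂ : ι → ℝ} {c c₁ c₂ : ℝ}

lemma sq_bigO (hz : Tendsto z l (nhds 0)) : (fun i => z i ^ 2) =O[l] z := by
  have : z =O[l] (fun _ => (1:ℝ)) := hz.isBigO_one ℝ
  simpa [sq] using this.mul (isBigO_refl z l)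

lemma sub_bigO (h : E2 l z f c d) (hz : Tendsto z l (nhds 0)) :
    (fun i => f i - c) =O[l] z := by
  have h1 := h.rem.trans (sq_bigO hz)
  have h2 : (fun i => d i * z i) =O[l] z := by simpa using h.bdd.mul (isBigO_refl z l)
  simpa using h1.add h2

lemma tendsto (h : E2 l z f c d) (hz : Tendsto z l (nhds 0)) : Tendsto f l (nhds c) := by
  have := (h.sub_bigO hz).trans_tendsto hz
  simpa using this.add_const c

lemma congr (h : E2 l z f c d) {d' : ι → ℝ} {f' : ι → ℝ} (hf : f =ᶠ[l] f') (hd : d =ᶠ[l] d') :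
    E2 l z f' c d' :=
  ⟨h.bdd.congr' hd EventuallyEq.rfl, h.rem.congr' (by
    filter_upwards [hf, hd] with i h1 h2
    rw [h1, h2]) EventuallyEq.rfl⟩

lemma mul (hz : Tendsto z l (nhds 0)) (h₁ : E2 l z f₁ c₁ d₁) (h₂ : E2 l z f₂ c₂ d₂) :
    E2 l z (fun i => f₁ i * f₂ i) (c₁ * c₂) (fun i => c₁ * d₂ i + c₂ * d₁ i) := by
  have hone : (fun _ : ι => c₁) =O[l] (fun _ => (1:ℝ)) := isBigO_const_const _ one_ne_zero _
  refine ⟨(h₂.bdd.const_mul_left c₁).add (h₁.bdd.const_mul_left c₂), ?_⟩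
  have hf2 : f₂ =O[l] (fun _ => (1:ℝ)) := (h₂.tendsto hz).isBigO_one ℝ
  have hz1 : z =O[l] (fun _ => (1:ℝ)) := hz.isBigO_one ℝ
  have e1 := h₁.rem.mul hf2
  have hdz : (fun i => d₁ i * z i) =O[l] (fun _ => (1:ℝ)) := by simpa using h₁.bdd.mul hz1
  have e2 := (hone.add hdz).mul h₂.rem
  have e3 := (h₁.bdd.mul h₂.bdd).mul (isBigO_refl (fun i => z i ^ 2) l)
  simp only [mul_one, one_mul] at e1 e2 e3
  refine ((e1.add e2).add e3).congr_left fun i => ?_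
  ring

lemma comp (hz : Tendsto z l (nhds 0)) (h : E2 l z f c d) {g : ℝ → ℝ} (hg : ContDiffAt ℝ 2 g c) :
    E2 l z (fun i => g (f i)) (g c) (fun i => deriv g c * d i) := by
  refine ⟨h.bdd.const_mul_left _, ?_⟩
  have e1 := ((taylor2 hg).comp_tendsto (h.tendsto hz)).trans ((h.sub_bigO hz).pow 2)
  have e2 := h.rem.const_mul_left (deriv g c)
  refine (e1.add e2).congr_left fun i => ?_
  simp only [Function.comp]
  ring

end E2

section psi
variable {ψ : ℝ → ℝ} {b α β : ℝ}

lemma psi_E2 (hψ : ContDiffAt ℝ 3 ψ 0) (hψ0 : ψ 0 = b) (hψ1 : deriv ψ 0 = -α) :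
    E2 (nhds 0) (fun w : ℝ => w) ψ b (fun _ => -α) := by
  refine ⟨isBigO_const_const _ one_ne_zero _, ?_⟩
  have := taylor2 (hψ.of_le (by norm_num : (2 : WithTop ℕ∞) ≤ 3))
  simpa [hψ0, hψ1] using this

lemma dpsi_E2 (hψ : ContDiffAt ℝ 3 ψ 0) (hψ1 : deriv ψ 0 = -α)
    (hψ2 : deriv (deriv ψ) 0 = 2 * β) :
    E2 (nhds 0) (fun w : ℝ => w) (deriv ψ) (-α) (fun _ => 2 * β) := by
  refine ⟨isBigO_const_const _ one_ne_zero _, ?_⟩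
  have h1 : ContDiffAt ℝ 2 (deriv ψ) 0 := hψ.derivWithin (by norm_num)
  have := taylor2 h1
  simpa [hψ1, hψ2] using this

lemma q_bound (hψ : ContDiffAt ℝ 3 ψ 0) (hψ0 : ψ 0 = b) (hψ1 : deriv ψ 0 = -α)
    (hψ2 : deriv (deriv ψ) 0 = 2 * β) :
    ∃ C > 0, ∃ ε > 0, ∀ z σ : ℝ, 0 ≤ z → z < ε → 0 ≤ σ → σ ≤ 1 →
      |ψ (z * σ) ^ 2 - ψ z ^ 2 - (2 * α * b * (z * (1 - σ)) -
        (α ^ 2 + 2 * b * β) * (z ^ 2 * (1 - σ ^ 2)))| ≤ C * z ^ 2 * (z * (1 - σ)) := by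
  have hd : ∀ᶠ u in nhds (0:ℝ), HasDerivAt ψ (deriv ψ u) u :=
    (hψ.eventually (by decide)).mono fun u hu => (hu.differentiableAt (by norm_num)).hasDerivAt
  have hE := (E2.mul tendsto_id (psi_E2 hψ hψ0 hψ1) (dpsi_E2 hψ hψ1 hψ2)).rem
  obtain ⟨C, hC, ε, hε, h⟩ := mvt_bigO
    (T := fun u => ψ u ^ 2 + 2 * α * b * u - (α ^ 2 + 2 * b * β) * u ^ 2)
    (T' := fun u => 2 * (ψ u * deriv ψ u - b * -α - (b * (2 * β) + -α * -α) * u)) (c := 0) (k := 2)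
    (hd.mono fun u hu => by
      have := ((hu.pow 2).add ((hasDerivAt_id u).const_mul (2 * α * b))).sub
        (((hasDerivAt_id u).pow 2).const_mul (α ^ 2 + 2 * b * β))
      refine this.congr_deriv ?_
      simp
      ring)
    (by simpa using hE.const_mul_left 2)
  refine ⟨C, hC, ε, hε, fun z σ hz hzε hσ hσ1 => ?_⟩
  have h1 : 0 ≤ z * σ := by positivity
  have h2 : z * σ ≤ z := by nlinarith
  have := h z hzε (z * σ) z (by simpa [abs_of_nonneg h1] using h2) (by simp [abs_of_nonneg hz])
  have h3 : |z * σ - z| = z * (1 - σ) := by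
    rw [abs_of_nonpos (by linarith)]; ring
  rw [h3] at this
  refine le_trans (le_of_eq ?_) this
  congr 1
  ring

/-- the filter of uniformity -/
abbrev LF : Filter (ℝ × ℝ) := nhdsWithin 0 (Ioi 0) ×ˢ 𝓟 (Ico (0:ℝ) 1)

lemma LF_mem : ∀ᶠ p in LF, 0 < p.1 ∧ 0 ≤ p.2 ∧ p.2 < 1 := by
  have := (self_mem_nhdsWithin (a := (0:ℝ)) (s := Ioi 0) : ∀ᶠ x in nhdsWithin (0:ℝ) (Ioi 0), 0 < x)
  exact (Eventually.prod_mk this (mem_principal_self (Ico (0:ℝ) 1) : ∀ᶠ s in 𝓟 (Ico (0:ℝ) 1), s ∈ Ico (0:ℝ) 1)).mono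
    fun p hp => ⟨hp.1, hp.2.1, hp.2.2⟩

lemma LF_fst : Tendsto Prod.fst LF (nhds (0:ℝ)) :=
  tendsto_fst.mono_right nhdsWithin_le_nhds

lemma LF_bdd : (fun p : ℝ × ℝ => p.2) =O[LF] (fun _ => (1:ℝ)) := by
  refine IsBigO.of_bound 1 (LF_mem.mono fun p hp => ?_)
  simp only [norm_one, Real.norm_eq_abs, abs_of_nonneg hp.2.1]
  linarith [hp.2.2]

lemma LF_one (k : ℝ) : (fun _ : ℝ × ℝ => k) =O[LF] (fun _ => (1:ℝ)) :=
  isBigO_const_const _ one_ne_zero _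

lemma H_expand (hb : 0 < b) (hα : 0 < α) (hψ : ContDiffAt ℝ 3 ψ 0) (hψ0 : ψ 0 = b)
    (hψ1 : deriv ψ 0 = -α) (hψ2 : deriv (deriv ψ) 0 = 2 * β) :
    E2 LF Prod.fst
      (fun p => ψ p.1 / (ψ (p.1 * p.2) * √(ψ (p.1 * p.2) ^ 2 - ψ p.1 ^ 2)) * √(p.1 * (1 - p.2)))
      (1 / √(2 * α * b)) (fun p => 1 / √(2 * α * b) *
        (-(α / b) * (1 - p.2) + (α ^ 2 + 2 * b * β) / (4 * α * b) * (1 + p.2))) := by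
  have hz := LF_fst
  have hN : E2 LF Prod.fst (fun p => ψ p.1) b (fun _ => -α) :=
    ⟨LF_one _, by simpa using! (psi_E2 hψ hψ0 hψ1).rem.comp_tendsto hz⟩
  have hpr : Tendsto (fun p : ℝ × ℝ => p.1 * p.2) LF (nhds 0) := by
    have := (isBigO_refl (Prod.fst : ℝ × ℝ → ℝ) LF).mul LF_bdd
    simp only [mul_one] at this
    exact this.trans_tendsto hz
  have hM : E2 LF Prod.fst (fun p => ψ (p.1 * p.2)) b (fun p => -α * p.2) := by
    refine ⟨LF_bdd.const_mul_left _, ?_⟩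
    have h1 := (psi_E2 hψ hψ0 hψ1).rem.comp_tendsto hpr
    have h2 := (isBigO_refl (Prod.fst : ℝ × ℝ → ℝ) LF).mul LF_bdd
    simp only [mul_one] at h2
    refine (h1.trans (h2.pow 2)).congr_left fun p => ?_
    simp only [Function.comp]
    ring
  have hq : E2 LF Prod.fst (fun p => (ψ (p.1 * p.2) ^ 2 - ψ p.1 ^ 2) / (p.1 * (1 - p.2)))
      (2 * α * b) (fun p => -(α ^ 2 + 2 * b * β) * (1 + p.2)) := by
    refine ⟨((LF_one 1).add LF_bdd).const_mul_left _, ?_⟩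
    obtain ⟨C, hC, ε, hε, h⟩ := q_bound hψ hψ0 hψ1 hψ2
    refine IsBigO.of_bound C ?_
    filter_upwards [LF_mem, hz.eventually (gt_mem_nhds hε)] with p hp hpε
    have hpos : 0 < p.1 * (1 - p.2) := mul_pos hp.1 (by linarith [hp.2.2])
    have := h p.1 p.2 hp.1.le hpε hp.2.1 hp.2.2.le
    have e : (ψ (p.1 * p.2) ^ 2 - ψ p.1 ^ 2) / (p.1 * (1 - p.2)) - 2 * α * b -
        -(α ^ 2 + 2 * b * β) * (1 + p.2) * p.1 = (ψ (p.1 * p.2) ^ 2 - ψ p.1 ^ 2 -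
        (2 * α * b * (p.1 * (1 - p.2)) - (α ^ 2 + 2 * b * β) * (p.1 ^ 2 * (1 - p.2 ^ 2))))
        / (p.1 * (1 - p.2)) := by
      rw [eq_div_iff hpos.ne', sub_mul, sub_mul, div_mul_cancel₀ _ hpos.ne']
      ring
    rw [e, Real.norm_eq_abs, abs_div, abs_of_pos hpos, div_le_iff₀ hpos]
    simpa using this
  have hu : 0 < 2 * α * b := by positivity
  have hMi := hM.comp hz (g := fun u => u⁻¹) (contDiffAt_inv ℝ hb.ne')
  have hqs := (hq.comp hz (g := fun u => √u) (contDiffAt_sqrt hu.ne')).comp hz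
    (g := fun u => u⁻¹) (contDiffAt_inv ℝ (Real.sqrt_pos.2 hu).ne')
  have hfin := (hN.mul hz hMi).mul hz hqs
  have hs : √(2 * α * b) ^ 2 = 2 * α * b := Real.sq_sqrt hu.le
  have hs0 : 0 < √(2 * α * b) := Real.sqrt_pos.2 hu
  have hd1 : deriv (fun u : ℝ => u⁻¹) b = -(b ^ 2)⁻¹ := deriv_inv
  have hd2 : deriv (fun u : ℝ => u⁻¹) √(2 * α * b) = -(√(2 * α * b) ^ 2)⁻¹ := deriv_inv
  have hd3 : deriv (fun u : ℝ => √u) (2 * α * b) = 1 / (2 * √(2 * α * b)) :=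
    (Real.hasDerivAt_sqrt hu.ne').deriv
  rw [hd1, hd2, hd3] at hfin
  have hc : b * b⁻¹ * (√(2 * α * b))⁻¹ = 1 / √(2 * α * b) := by field_simp
  rw [hc] at hfin
  refine hfin.congr ?_ (Eventually.of_forall fun p => ?_)
  · filter_upwards [LF_mem] with p hp
    have hpos : 0 < p.1 * (1 - p.2) := mul_pos hp.1 (by linarith [hp.2.2])
    rw [Real.sqrt_div' _ hpos.le]
    have := Real.sqrt_pos.2 hpos
    simp only [div_eq_mul_inv, mul_inv, inv_inv]
    ring
  · simp only [hs]
    generalize √(2 * α * b) = s at *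
    field_simp
    ring

end psi

lemma subst_pos (h : ℝ → ℝ) {X ρ : ℝ} (hX : 0 < X) (hz : ∀ u, X ≤ u → u < ρ → h u = 0)
    {x : ℝ} (hx : 0 ≤ x) (hxρ : x < ρ) :
    ∫ u in (0:ℝ)..x, h u = ∫ t in (0:ℝ)..arcsin (x / X), X * cos t * h (X * sin t) := by
  have hτ : 0 ≤ arcsin (x / X) := arcsin_nonneg.2 (by positivity)
  have hτ1 : arcsin (x / X) ≤ π / 2 := arcsin_le_pi_div_two _
  have key := MeasureTheory.integral_Icc_deriv_smul_of_deriv_nonneg (f := fun t => X * sin t)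
    (f' := fun t => X * cos t) (g := h) (a := 0) (b := arcsin (x / X)) (by fun_prop)
    (fun t _ => (Real.hasDerivAt_sin t).const_mul X)
    (fun t ht => mul_nonneg hX.le (cos_nonneg_of_mem_Icc
      ⟨by linarith [ht.1, pi_pos], by linarith [ht.2]⟩)) hτ
  simp only [smul_eq_mul, sin_zero, mul_zero] at key
  rw [intervalIntegral.integral_of_le hτ, intervalIntegral.integral_of_le hx,
    ← MeasureTheory.integral_Icc_eq_integral_Ioc, ← MeasureTheory.integral_Icc_eq_integral_Ioc, key]
  rcases le_total x X with hxX | hxX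
  · rw [sin_arcsin (by have : 0 ≤ x / X := by positivity
                       linarith) ((div_le_one hX).2 hxX), mul_div_cancel₀ _ hX.ne']
  · rw [arcsin_of_one_le ((one_le_div hX).2 hxX), sin_pi_div_two, mul_one]
    refine MeasureTheory.setIntegral_eq_of_subset_of_forall_sdiff_eq_zero measurableSet_Icc
      (Icc_subset_Icc_right hxX) fun u hu => ?_
    refine hz u ?_ (lt_of_le_of_lt hu.1.2 hxρ)
    by_contra hlt
    exact hu.2 ⟨hu.1.1, (not_le.1 hlt).le⟩

lemma integral_neg_of_even {g : ℝ → ℝ} (hg : ∀ u, g (-u) = g u) (y : ℝ) :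
    ∫ u in (0:ℝ)..(-y), g u = - ∫ u in (0:ℝ)..y, g u := by
  have := intervalIntegral.integral_comp_neg (a := 0) (b := y) g
  simp only [hg, neg_zero] at this
  rw [this, intervalIntegral.integral_symm]

lemma subst_all (h : ℝ → ℝ) (he : ∀ u, h (-u) = h u) {X ρ : ℝ} (hX : 0 < X)
    (hz : ∀ u, X ≤ u → u < ρ → h u = 0) {x : ℝ} (hxρ : |x| < ρ) :
    ∫ u in (0:ℝ)..x, h u = ∫ t in (0:ℝ)..arcsin (x / X), X * cos t * h (X * sin t) := by
  rcases le_total 0 x with hx | hx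
  · exact subst_pos h hX hz hx (by rwa [abs_of_nonneg hx] at hxρ)
  · have := subst_pos h hX hz (x := -x) (by linarith) (by rwa [abs_of_nonpos hx] at hxρ)
    rw [integral_neg_of_even he, neg_div, arcsin_neg, integral_neg_of_even] at this
    · linarith
    · intro u
      rw [cos_neg, sin_neg, mul_neg, he]

lemma psi_mono {ψ : ℝ → ℝ} {b α : ℝ} (hb : 0 < b) (hα : 0 < α) (hψ : ContDiffAt ℝ 3 ψ 0)
    (hψ0 : ψ 0 = b) (hψ1 : deriv ψ 0 = -α) :
    ∃ ε > 0, (∀ w, |w| < ε → ContinuousAt ψ w ∧ 0 < ψ w) ∧ StrictAntiOn ψ (Ico 0 ε) := by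
  have h1 : ContDiffAt ℝ 2 (deriv ψ) 0 := hψ.derivWithin (by norm_num)
  have e1 : ∀ᶠ w in nhds (0:ℝ), deriv ψ w < 0 :=
    h1.continuousAt.eventually (gt_mem_nhds (by rw [hψ1]; linarith))
  have e2 : ∀ᶠ w in nhds (0:ℝ), 0 < ψ w :=
    hψ.continuousAt.eventually (lt_mem_nhds (by rw [hψ0]; linarith))
  have e3 : ∀ᶠ w in nhds (0:ℝ), ContinuousAt ψ w :=
    (hψ.eventually (by decide)).mono fun u hu => hu.continuousAt
  obtain ⟨ε, hε, h⟩ := Metric.eventually_nhds_iff.1 (e1.and (e2.and e3))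
  simp only [dist_zero_right, Real.norm_eq_abs] at h
  refine ⟨ε, hε, fun w hw => ⟨(h hw).2.2, (h hw).2.1⟩, ?_⟩
  refine strictAntiOn_of_deriv_neg (convex_Ico _ _) (fun w hw => ?_) (fun w hw => ?_)
  · exact (h (by rw [abs_of_nonneg hw.1]; exact hw.2)).2.2.continuousWithinAt
  · rw [interior_Ico] at hw
    exact (h (by rw [abs_of_pos hw.1]; exact hw.2)).1

lemma J_expand {ψ : ℝ → ℝ} {b α β : ℝ} (hb : 0 < b) (hα : 0 < α) (hψ : ContDiffAt ℝ 3 ψ 0)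
    (hψ0 : ψ 0 = b) (hψ1 : deriv ψ 0 = -α) (hψ2 : deriv (deriv ψ) 0 = 2 * β) {θ A B : ℝ}
    (hθ : θ = 1 / √(2 * α * b)) (hA : A = -(α / b) + (α ^ 2 + 2 * b * β) / (4 * α * b))
    (hB : B = α / b + (α ^ 2 + 2 * b * β) / (4 * α * b)) :
    ∃ C > 0, ∃ ε > 0, ∀ X, 0 < X → X < ε → ∀ x, |x| < ε →
      |(∫ u in (0:ℝ)..x, ψ (X ^ 2) / (ψ (u ^ 2) * √(ψ (u ^ 2) ^ 2 - ψ (X ^ 2) ^ 2))) -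
        θ * (arcsin (x / X) + X ^ 2 * (A * arcsin (x / X) + B *
          ((arcsin (x / X) - sin (arcsin (x / X)) * cos (arcsin (x / X))) / 2)))|
        ≤ C * X ^ 4 * |arcsin (x / X)| := by
  obtain ⟨ε₁, hε₁, hpos, hanti⟩ := psi_mono hb hα hψ hψ0 hψ1
  obtain ⟨C, hC, hO⟩ := (H_expand hb hα hψ hψ0 hψ1 hψ2).rem.exists_pos
  rw [IsBigOWith, eventually_prod_principal_iff] at hO
  obtain ⟨ε₂, hε₂, hO⟩ := mem_nhdsGT_iff_exists_Ioo_subset.1 hO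
  have hε₂' : 0 < ε₂ := hε₂
  refine ⟨C, hC, min 1 (min ε₁ ε₂), by positivity, fun X hX hXε x hx => ?_⟩
  have hX1 : X < 1 := hXε.trans_le (min_le_left _ _)
  have hXε₁ : X < ε₁ := hXε.trans_le ((min_le_right _ _).trans (min_le_left _ _))
  have hXε₂ : X < ε₂ := hXε.trans_le ((min_le_right _ _).trans (min_le_right _ _))
  have hX2 : X ^ 2 < X := by nlinarith
  have hνpos : 0 < ψ (X ^ 2) := (hpos _ (by rw [abs_of_pos (by positivity)]; linarith)).2
  set h : ℝ → ℝ := fun u => ψ (X ^ 2) / (ψ (u ^ 2) * √(ψ (u ^ 2) ^ 2 - ψ (X ^ 2) ^ 2)) with hh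
  have hsub := subst_all h (fun u => by simp [hh]) hX (ρ := min 1 (min ε₁ ε₂)) (fun u hu huρ => by
    have hu1 : u < 1 := huρ.trans_le (min_le_left _ _)
    have huε₁ : u < ε₁ := huρ.trans_le ((min_le_right _ _).trans (min_le_left _ _))
    have hu2 : u ^ 2 < ε₁ := by nlinarith
    have hle : ψ (u ^ 2) ≤ ψ (X ^ 2) := hanti.antitoneOn ⟨by positivity, by linarith⟩
      ⟨by positivity, hu2⟩ (by gcongr)
    have h0 := (hpos (u ^ 2) (by rwa [abs_of_nonneg (by positivity)])).2
    have : √(ψ (u ^ 2) ^ 2 - ψ (X ^ 2) ^ 2) = 0 := Real.sqrt_eq_zero_of_nonpos (by nlinarith)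
    simp [hh, this]) hx
  change |(∫ u in (0:ℝ)..x, h u) - _| ≤ _
  rw [hsub]
  set τ := arcsin (x / X) with hτ
  have hτ1 : -(π / 2) ≤ τ := neg_pi_div_two_le_arcsin _
  have hτ2 : τ ≤ π / 2 := arcsin_le_pi_div_two _
  set G : ℝ → ℝ := fun t => X * cos t * h (X * sin t) with hG
  set L : ℝ → ℝ := fun t => θ * (1 + X ^ 2 * (A + B * sin t ^ 2)) with hL
  have hbound : ∀ t ∈ Ioo (-(π / 2)) (π / 2), |G t - L t| ≤ C * X ^ 4 := by
    intro t ht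
    have hc : 0 < cos t := cos_pos_of_mem_Ioo ht
    have hs : sin t ^ 2 = 1 - cos t ^ 2 := by linarith [sin_sq_add_cos_sq t]
    have hs1 : sin t ^ 2 < 1 := by rw [hs]; nlinarith
    have := hO (show X ^ 2 ∈ Ioo 0 ε₂ from ⟨by positivity, by linarith⟩) (sin t ^ 2)
      ⟨by positivity, hs1⟩
    simp only [Real.norm_eq_abs] at this
    have e1 : √(X ^ 2 * (1 - sin t ^ 2)) = X * cos t := by
      rw [hs, show X ^ 2 * (1 - (1 - cos t ^ 2)) = (X * cos t) ^ 2 by ring,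
        Real.sqrt_sq (by positivity)]
    rw [e1, ← mul_pow, ← hθ] at this
    have e2 : |(X ^ 2) ^ 2| = X ^ 4 := by rw [abs_of_nonneg (by positivity)]; ring
    rw [e2] at this
    refine le_trans (le_of_eq ?_) this
    congr 1
    simp only [hG, hL, hh, hA, hB]
    ring
  have hcont : ContinuousOn G (Ioo (-(π / 2)) (π / 2)) := by
    intro t ht
    apply ContinuousAt.continuousWithinAt
    have hc : 0 < cos t := cos_pos_of_mem_Ioo ht
    have hs : sin t ^ 2 = 1 - cos t ^ 2 := by linarith [sin_sq_add_cos_sq t]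
    have hlt : (X * sin t) ^ 2 < X ^ 2 := by rw [mul_pow, hs]; nlinarith [mul_pos hX hX, mul_pos hc hc, mul_pos (mul_pos hX hX) (mul_pos hc hc)]
    have hlt2 : ψ (X ^ 2) < ψ ((X * sin t) ^ 2) := hanti ⟨by positivity, by linarith⟩
      ⟨by positivity, by linarith⟩ hlt
    have hca : ContinuousAt (fun t => ψ ((X * sin t) ^ 2)) t := by
      refine ContinuousAt.comp (f := fun t => (X * sin t) ^ 2) (g := ψ) ?_ (by fun_prop)
      exact (hpos _ (by rw [abs_of_nonneg (by positivity)]; linarith)).1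
    have hne : ψ ((X * sin t) ^ 2) * √(ψ ((X * sin t) ^ 2) ^ 2 - ψ (X ^ 2) ^ 2) ≠ 0 := by
      have : 0 < √(ψ ((X * sin t) ^ 2) ^ 2 - ψ (X ^ 2) ^ 2) := Real.sqrt_pos.2 (by nlinarith)
      have h2 : 0 < ψ ((X * sin t) ^ 2) := by linarith
      positivity
    refine ContinuousAt.mul (by fun_prop) ?_
    exact ContinuousAt.div continuousAt_const (hca.mul ((hca.pow 2).sub continuousAt_const).sqrt) hne
  have hLc : Continuous L := by fun_prop
  have hint : MeasureTheory.IntegrableOn (fun t => G t - L t) (Icc (-(π / 2)) (π / 2)) := by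
    rw [integrableOn_Icc_iff_integrableOn_Ioo]
    refine ⟨(hcont.sub hLc.continuousOn).aestronglyMeasurable measurableSet_Ioo,
      MeasureTheory.HasFiniteIntegral.restrict_of_bounded (C := C * X ^ 4) (by simp) ?_⟩
    exact (MeasureTheory.ae_restrict_mem measurableSet_Ioo).mono fun t ht => hbound t ht
  have hsubset : uIcc 0 τ ⊆ Icc (-(π / 2)) (π / 2) := by
    intro t ht
    rw [mem_uIcc] at ht
    have := pi_pos
    constructor <;> rcases ht with ht | ht <;> linarith [ht.1, ht.2]
  have hGL : IntervalIntegrable (fun t => G t - L t) MeasureTheory.volume 0 τ :=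
    (hint.mono_set hsubset).intervalIntegrable
  have hLi : IntervalIntegrable L MeasureTheory.volume 0 τ := hLc.intervalIntegrable _ _
  have hsplit : ∫ t in (0:ℝ)..τ, G t =
      (∫ t in (0:ℝ)..τ, (G t - L t)) + ∫ t in (0:ℝ)..τ, L t := by
    rw [← intervalIntegral.integral_add hGL hLi]
    simp
  have hLval : ∫ t in (0:ℝ)..τ, L t =
      θ * (τ + X ^ 2 * (A * τ + B * ((τ - sin τ * cos τ) / 2))) := by
    simp only [hL]
    rw [intervalIntegral.integral_const_mul, intervalIntegral.integral_add (by simp)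
      (Continuous.intervalIntegrable (by fun_prop) _ _), intervalIntegral.integral_const_mul,
      intervalIntegral.integral_add (by simp)
      (Continuous.intervalIntegrable (by fun_prop) _ _), intervalIntegral.integral_const_mul,
      integral_sin_sq]
    simp
    ring_nf
    tauto
  rw [hsplit, hLval, add_sub_cancel_right]
  have hb := intervalIntegral.norm_integral_le_of_norm_le_const_ae (a := 0) (b := τ)
    (C := C * X ^ 4) (f := fun t => G t - L t) ?_
  · simpa using hb
  · have hne : ∀ᵐ t : ℝ, t ∉ ({π / 2, -(π / 2)} : Set ℝ) :=
      (Set.Finite.countable (by simp)).ae_notMem _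
    filter_upwards [hne] with t ht htτ
    simp only [mem_insert_iff, mem_singleton_iff, not_or] at ht
    have := hsubset (uIoc_subset_uIcc htτ)
    exact hbound t ⟨lt_of_le_of_ne this.1 (Ne.symm ht.2), lt_of_le_of_ne this.2 ht.1⟩

lemma bigO_of_sub_littleO {ι : Type*} {l : Filter ι} {f g : ι → ℝ} {k : ℝ} (hk : k ≠ 0)
    (h : (fun i => g i - k * f i) =o[l] f) : f =O[l] g := by
  have h1 : (fun i => g i - k * f i) =o[l] fun i => k * f i := h.const_mul_right hk
  have h2 : IsEquivalent l g (fun i => k * f i) := h1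
  have h3 := h2.isBigO_symm
  exact (isBigO_const_mul_left_iff hk).1 h3

lemma littleO_of_bigO_mul {ι : Type*} {l : Filter ι} {f g e : ι → ℝ} (he : Tendsto e l (nhds 0))
    (h : g =O[l] fun i => e i * f i) : g =o[l] f := by
  have h1 : e =o[l] (fun _ => (1:ℝ)) := (isLittleO_one_iff ℝ).2 he
  have := h1.mul_isBigO (isBigO_refl f l)
  simp only [one_mul] at this
  exact h.trans_isLittleO this

/-- relation between the turning point and the initial angle -/
lemma eta_expand {ι : Type*} {l : Filter ι} {ψ : ℝ → ℝ} {b α : ℝ} (hb : 0 < b) (hα : 0 < α)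
    (hψ : ContDiffAt ℝ 3 ψ 0) (hψ0 : ψ 0 = b) (hψ1 : deriv ψ 0 = -α) {X ν : ι → ℝ}
    (hX : Tendsto X l (nhds 0)) (hXpos : ∀ᶠ i in l, 0 < X i) (hν : ∀ᶠ i in l, ψ (X i ^ 2) = ν i)
    (hνb : ∀ᶠ i in l, ν i < b) :
    X =O[l] (fun i => arccos (ν i / b)) ∧
    (fun i => X i ^ 3 - √(b / (2 * α)) * (b / (2 * α)) * arccos (ν i / b) ^ 3) =O[l]
      (fun i => arccos (ν i / b) ^ 5) := by
  have hz : Tendsto (fun i => X i ^ 2) l (nhds 0) := by simpa using hX.pow 2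
  have h1 : (fun i => ν i - b + α * X i ^ 2) =O[l] (fun i => (X i ^ 2) ^ 2) := by
    refine ((psi_E2 hψ hψ0 hψ1).rem.comp_tendsto hz).congr' ?_ EventuallyEq.rfl
    filter_upwards [hν] with i hi
    simp only [Function.comp]
    rw [hi]; ring
  have hνt : Tendsto ν l (nhds b) := by
    have := hψ.continuousAt.tendsto.comp hz
    rw [hψ0] at this
    exact this.congr' (by filter_upwards [hν] with i hi; simpa using hi)
  set η : ι → ℝ := fun i => arccos (ν i / b) with hη
  have hηt : Tendsto η l (nhds 0) := by
    have h2 : Tendsto (fun i => ν i / b) l (nhds 1) := by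
      simpa [div_self hb.ne'] using hνt.div_const b
    have := (continuous_arccos.tendsto 1).comp h2
    rwa [arccos_one] at this
  have hηpos : ∀ᶠ i in l, 0 < η i := by
    filter_upwards [hνb] with i hi
    exact arccos_pos.2 ((div_lt_one hb).2 hi)
  have hcos : ∀ᶠ i in l, cos (η i) = ν i / b := by
    filter_upwards [hνb, hνt.eventually (lt_mem_nhds hb)] with i hi hi0
    refine cos_arccos ?_ ((div_le_one hb).2 hi.le)
    have : 0 < ν i / b := by positivity
    linarith
  have hcb : (fun i => 1 - cos (η i) - η i ^ 2 / 2) =O[l] (fun i => η i ^ 4) := by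
    refine IsBigO.of_bound 1 ?_
    filter_upwards [hηt.eventually (Metric.ball_mem_nhds 0 one_pos)] with i hi
    have h3 : |η i| ≤ 1 := by simpa using (le_of_lt hi)
    have := Real.cos_bound h3
    rw [Real.norm_eq_abs, Real.norm_eq_abs, abs_pow, ← abs_neg]
    rw [show -(1 - cos (η i) - η i ^ 2 / 2) = cos (η i) - (1 - η i ^ 2 / 2) by ring]
    have : 0 ≤ |η i| ^ 4 := by positivity
    linarith
  have hηsq : (fun i => η i ^ 4) =O[l] (fun i => η i ^ 2) := by
    have : (fun i => (η i ^ 2) ^ 2) =O[l] (fun i => η i ^ 2) := E2.sq_bigO (by simpa using hηt.pow 2)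
    refine this.congr_left fun i => by ring
  have hc2 : (fun i => 1 - cos (η i)) =O[l] (fun i => η i ^ 2) := by
    have := (hcb.trans hηsq).add ((isBigO_refl (fun i => η i ^ 2) l).const_mul_left (1 / 2))
    refine this.congr_left fun i => by ring
  have h2 : (fun i => (1 - cos (η i)) - α / b * X i ^ 2) =O[l] (fun i => (X i ^ 2) ^ 2) := by
    refine (h1.const_mul_left (-1 / b)).congr' ?_ EventuallyEq.rfl
    filter_upwards [hcos] with i hi
    rw [hi]; field_simp; ring
  have hzO : (fun i => X i ^ 2) =O[l] (fun i => η i ^ 2) := by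
    refine (bigO_of_sub_littleO (k := α / b) (by positivity) ?_).trans hc2
    exact littleO_of_bigO_mul hz (h2.congr_right fun i => by ring)
  have hXη : X =O[l] η := by
    have := hzO.of_pow (by norm_num)
    exact this
  refine ⟨hXη, ?_⟩
  have h4 : (fun i => X i ^ 2 - b / (2 * α) * η i ^ 2) =O[l] (fun i => η i ^ 4) := by
    have e1 := (h2.trans (hzO.pow 2)).const_mul_left (-(b / α))
    have e2 := hcb.const_mul_left (b / α)
    refine (e1.add (e2.congr_right (fun i => by ring))).congr (fun i => ?_) (fun i => by ring)
    field_simp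
    ring
  have hcpos : 0 < b / (2 * α) := by positivity
  have hE : E2 l η (fun i => X i ^ 2 / η i ^ 2) (b / (2 * α)) (fun _ => 0) := by
    refine ⟨isBigO_const_const _ one_ne_zero _, ?_⟩
    have := h4.mul (isBigO_refl (fun i => (η i ^ 2)⁻¹) l)
    refine this.congr' ?_ ?_
    · filter_upwards [hηpos] with i hi
      field_simp
      ring
    · filter_upwards [hηpos] with i hi
      field_simp
  have hF := (hE.comp hηt (g := fun u => √u * u)
    ((contDiffAt_sqrt hcpos.ne').mul contDiffAt_id)).rem.mul (isBigO_refl (fun i => η i ^ 3) l)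
  refine hF.congr' ?_ (Eventually.of_forall fun i => by ring)
  filter_upwards [hηpos, hXpos] with i hi hXi
  rw [Real.sqrt_div' _ (by positivity), Real.sqrt_sq hi.le, Real.sqrt_sq hXi.le]
  field_simp
  ring

lemma const_id {b α β A B : ℝ} (hb : 0 < b) (hα : 0 < α)
    (hA : A = -(α / b) + (α ^ 2 + 2 * b * β) / (4 * α * b))
    (hB : B = α / b + (α ^ 2 + 2 * b * β) / (4 * α * b)) :
    (6 * b * β - α ^ 2) * √b * π / (16 * √2 * α ^ ((5:ℝ)/2)) =
      π * (A + B / 2) * (√(b / (2 * α)) * (b / (2 * α))) := by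
  have h1 : α ^ ((5:ℝ)/2) = α ^ 2 * √α := by
    rw [show (5:ℝ)/2 = 2 + 1/2 by norm_num, Real.rpow_add hα, Real.sqrt_eq_rpow]
    norm_num
  rw [h1, hA, hB, Real.sqrt_div hb.le, Real.sqrt_mul (by norm_num)]
  have := Real.sqrt_pos.2 hα
  have h2 := Real.sqrt_pos.2 (show (0:ℝ) < 2 by norm_num)
  field_simp
  ring

/-- First intersection of the geodesic with Clairaut constant `ν` with the meridian
`θ = θ_cut`: as the initial angle `η = arccos(ν/b) → 0⁺`,
`r_ν = a − ((6bβ − α²)√b π/(16√2 α^{5/2})) η³ + O(η⁵)`. -/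
theorem meridian_intersection_expansion
    (a b α : ℝ) (ha : 0 < a) (hb : 0 < b) (hα : 0 < α) (β : ℝ)
    (ψ : ℝ → ℝ) (δ : ℝ) (hδ : 0 < δ) (hψ : ContDiffOn ℝ (⊤ : ℕ∞) ψ (Ioo (-δ) δ))
    (hψ0 : ψ 0 = b) (hψ1 : deriv ψ 0 = -α) (hψ2 : deriv (deriv ψ) 0 = 2 * β)
    (m : ℝ → ℝ) (hm : ∀ r, m r = ψ ((a - r) ^ 2))
    (R : ℝ → ℝ)
    (hRlt : ∀ᶠ ν in nhdsWithin b (Iio b), R ν < a)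
    (hRm : ∀ᶠ ν in nhdsWithin b (Iio b), m (R ν) = ν)
    (hRtend : Tendsto R (nhdsWithin b (Iio b)) (nhds a))
    (φ : ℝ → ℝ)
    (hφ : ∀ ν, φ ν = 2 * ∫ r in R ν..a, ν / (m r * Real.sqrt (m r ^ 2 - ν ^ 2)))
    (θcut : ℝ) (hθcut : θcut = π / Real.sqrt (2 * α * b))
    (rν : ℝ → ℝ)
    (hrν_eq : ∀ᶠ ν in nhdsWithin b (Iio b),
      (∫ s in rν ν..a, ν / (m s * Real.sqrt (m s ^ 2 - ν ^ 2))) = φ ν - θcut)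
    (hrν_tend : Tendsto rν (nhdsWithin b (Iio b)) (nhds a)) :
    (fun ν => rν ν -
        (a - (6 * b * β - α ^ 2) * Real.sqrt b * π / (16 * Real.sqrt 2 * α ^ ((5:ℝ)/2))
          * Real.arccos (ν / b) ^ 3))
      =O[nhdsWithin b (Iio b)] (fun ν => Real.arccos (ν / b) ^ 5) := by
  have hψ3 : ContDiffAt ℝ 3 ψ 0 :=
    ((hψ.contDiffAt (Ioo_mem_nhds (by linarith) hδ)).of_le (WithTop.coe_le_coe.2 (le_top : (3:ℕ∞) ≤ ⊤)))
  set l := nhdsWithin b (Iio b) with hl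
  obtain ⟨θ, hθ⟩ : ∃ θ, θ = 1 / √(2 * α * b) := ⟨_, rfl⟩
  obtain ⟨A, hA⟩ : ∃ A, A = -(α / b) + (α ^ 2 + 2 * b * β) / (4 * α * b) := ⟨_, rfl⟩
  obtain ⟨B, hB⟩ : ∃ B, B = α / b + (α ^ 2 + 2 * b * β) / (4 * α * b) := ⟨_, rfl⟩
  have hθpos : 0 < θ := by rw [hθ]; positivity
  have hθc : θcut = π * θ := by rw [hθcut, hθ]; ring
  obtain ⟨C, hC, ε, hε, hJ⟩ := J_expand hb hα hψ3 hψ0 hψ1 hψ2 hθ hA hB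
  set X : ℝ → ℝ := fun ν => a - R ν with hXdef
  set x : ℝ → ℝ := fun ν => a - rν ν with hxdef
  have hX : Tendsto X l (nhds 0) := by simpa using hRtend.const_sub a
  have hx : Tendsto x l (nhds 0) := by simpa using hrν_tend.const_sub a
  have hXpos : ∀ᶠ ν in l, 0 < X ν := hRlt.mono fun ν h => by simp only [hXdef]; linarith
  have hν : ∀ᶠ ν in l, ψ (X ν ^ 2) = ν := hRm.mono fun ν h => by rw [hm] at h; exact h
  have hz : Tendsto (fun i => X i ^ 2) l (nhds 0) := by simpa using hX.pow 2
  -- the integrals in centred coordinates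
  have hcv : ∀ ν r : ℝ, ∫ s in r..a, ν / (m s * √(m s ^ 2 - ν ^ 2)) =
      ∫ u in (0:ℝ)..(a - r), ν / (ψ (u ^ 2) * √(ψ (u ^ 2) ^ 2 - ν ^ 2)) := by
    intro ν r
    have := intervalIntegral.integral_comp_sub_left (a := 0) (b := a - r)
      (fun s => ν / (m s * √(m s ^ 2 - ν ^ 2))) a
    simp only [sub_sub_cancel, sub_zero, hm] at this
    simp only [hm]
    exact this.symm
  set τ : ℝ → ℝ := fun ν => arcsin (x ν / X ν) with hτdef
  have hXε : ∀ᶠ ν in l, |X ν| < ε := by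
    filter_upwards [hX.eventually (Metric.ball_mem_nhds 0 hε)] with ν h
    simpa using h
  have hxε : ∀ᶠ ν in l, |x ν| < ε := by
    filter_upwards [hx.eventually (Metric.ball_mem_nhds 0 hε)] with ν h
    simpa using h
  -- expansion of the half period
  have hD : (fun ν => (φ ν - θcut) - π * θ * (A + B / 2) * X ν ^ 2) =O[l] (fun ν => X ν ^ 4) := by
    refine IsBigO.of_bound (C * π) ?_
    filter_upwards [hXpos, hXε, hν] with ν h1 h2 h3
    have := hJ (X ν) h1 (lt_of_abs_lt h2) (X ν) h2
    rw [h3, ← hcv, div_self h1.ne', arcsin_one, cos_pi_div_two, abs_of_pos pi_div_two_pos] at this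
    rw [Real.norm_eq_abs, Real.norm_eq_abs, abs_of_pos (show 0 < X ν ^ 4 by positivity), hφ, hθc,
      show C * π * X ν ^ 4 = 2 * (C * X ν ^ 4 * (π / 2)) by ring]
    refine le_trans (le_of_eq ?_) (mul_le_mul_of_nonneg_left this zero_le_two)
    rw [← abs_of_pos (zero_lt_two (α := ℝ)), ← abs_mul, abs_of_pos (zero_lt_two (α := ℝ))]
    congr 1
    ring
  have hX42 : (fun ν => X ν ^ 4) =O[l] (fun ν => X ν ^ 2) := by
    refine (E2.sq_bigO hz).congr_left fun i => by ring
  have hDO : (fun ν => φ ν - θcut) =O[l] (fun ν => X ν ^ 2) := by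
    refine ((hD.trans hX42).add ((isBigO_refl (fun ν => X ν ^ 2) l).const_mul_left
      (π * θ * (A + B / 2)))).congr_left fun i => by ring
  have hDτ : (fun ν => (φ ν - θcut) - θ * τ ν) =O[l] (fun ν => X ν ^ 2 * τ ν) := by
    refine IsBigO.of_bound (C + θ * (|A| + |B|)) ?_
    filter_upwards [hXpos, hXε, hxε, hν, hrν_eq, hX.eventually (gt_mem_nhds one_pos)]
      with ν h1 h2 h3 h4 h5 h6
    have := hJ (X ν) h1 (lt_of_abs_lt h2) (x ν) h3
    rw [h4, ← hcv, h5] at this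
    change |φ ν - θcut - θ * (τ ν + X ν ^ 2 * (A * τ ν + B * ((τ ν - sin (τ ν) * cos (τ ν)) / 2)))|
      ≤ C * X ν ^ 4 * |τ ν| at this
    have hs : |(τ ν - sin (τ ν) * cos (τ ν)) / 2| ≤ |τ ν| := by
      have e1 : |sin (τ ν)| ≤ |τ ν| := abs_sin_le_abs
      have e2 : |cos (τ ν)| ≤ 1 := abs_cos_le_one _
      have e3 : |sin (τ ν) * cos (τ ν)| ≤ |τ ν| := by
        rw [abs_mul]; nlinarith [abs_nonneg (sin (τ ν)), abs_nonneg (τ ν)]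
      have e4 := abs_sub (τ ν) (sin (τ ν) * cos (τ ν))
      rw [abs_div, abs_two]
      linarith
    have hs2 : |A * τ ν + B * ((τ ν - sin (τ ν) * cos (τ ν)) / 2)| ≤ (|A| + |B|) * |τ ν| := by
      refine (abs_add_le _ _).trans ?_
      rw [abs_mul, abs_mul]
      nlinarith [mul_le_mul_of_nonneg_left hs (abs_nonneg B)]
    have hs3 : |θ * X ν ^ 2 * (A * τ ν + B * ((τ ν - sin (τ ν) * cos (τ ν)) / 2))| ≤
        θ * X ν ^ 2 * ((|A| + |B|) * |τ ν|) := by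
      rw [abs_mul, abs_of_pos (show 0 < θ * X ν ^ 2 by positivity)]
      gcongr
    have hs4 : C * X ν ^ 4 * |τ ν| ≤ C * X ν ^ 2 * |τ ν| := by
      have : X ν ^ 4 ≤ X ν ^ 2 := pow_le_pow_of_le_one h1.le h6.le (by norm_num)
      gcongr
    rw [Real.norm_eq_abs, Real.norm_eq_abs, abs_mul, abs_of_pos (show 0 < X ν ^ 2 by positivity)]
    have e : φ ν - θcut - θ * τ ν = (φ ν - θcut - θ * (τ ν + X ν ^ 2 * (A * τ ν + B *
        ((τ ν - sin (τ ν) * cos (τ ν)) / 2)))) + θ * X ν ^ 2 * (A * τ ν + B *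
        ((τ ν - sin (τ ν) * cos (τ ν)) / 2)) := by ring
    rw [e]
    refine (abs_add_le _ _).trans ?_
    linarith
  have hτO : τ =O[l] (fun ν => X ν ^ 2) :=
    (bigO_of_sub_littleO hθpos.ne' (littleO_of_bigO_mul hz hDτ)).trans hDO
  have hτ0 : Tendsto τ l (nhds 0) := hτO.trans_tendsto hz
  have hτE : (fun ν => τ ν - π * (A + B / 2) * X ν ^ 2) =O[l] (fun ν => X ν ^ 4) := by
    have e1 : (fun ν => (φ ν - θcut) - θ * τ ν) =O[l] (fun ν => X ν ^ 4) :=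
      (hDτ.trans ((isBigO_refl (fun ν => X ν ^ 2) l).mul hτO)).congr_right fun i => by ring
    refine ((hD.sub e1).const_mul_left (1 / θ)).congr_left fun i => ?_
    field_simp
    ring
  have hsin : (fun ν => sin (τ ν) - τ ν) =O[l] (fun ν => X ν ^ 4) := by
    have h1 := (taylor2 (g := sin) (c := 0) contDiff_sin.contDiffAt).comp_tendsto hτ0
    have h2 := h1.trans (by simpa [Function.comp_def] using hτO.pow 2)
    refine h2.congr (fun i => ?_) (fun i => by ring)
    simp [Function.comp]
  have hxs : ∀ᶠ ν in l, x ν = X ν * sin (τ ν) := by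
    filter_upwards [hτ0.eventually (Metric.ball_mem_nhds 0 pi_div_two_pos), hXpos] with ν h h1
    have h2 : |τ ν| < π / 2 := by simpa using h
    rw [abs_lt] at h2
    rw [show sin (τ ν) = x ν / X ν from sin_arcsin (neg_pi_div_two_lt_arcsin.1 h2.1).le
      (arcsin_lt_pi_div_two.1 h2.2).le, mul_div_cancel₀ _ h1.ne']
  have hxE : (fun ν => x ν - π * (A + B / 2) * X ν ^ 3) =O[l] (fun ν => X ν ^ 5) := by
    have := (isBigO_refl X l).mul (hsin.add hτE)
    refine this.congr' ?_ (Eventually.of_forall fun i => by ring)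
    filter_upwards [hxs] with ν h
    rw [h]; ring
  obtain ⟨g1, g2⟩ := eta_expand hb hα hψ3 hψ0 hψ1 (ν := fun ν => ν) hX hXpos hν
    self_mem_nhdsWithin
  have hf1 := hxE.trans (g1.pow 5)
  have hf2 := g2.const_mul_left (π * (A + B / 2))
  refine (hf1.add hf2).neg_left.congr_left fun ν => ?_
  rw [const_id hb hα hA hB]
  simp only [hxdef]
  ring
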